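/- The state probabilities p_k(t) = λ^{δk} t^{νδk} E_{ν,νδk+1}^{δk}(−λ t^ν) − λ^{δ(k+1)} t^{νδ(k+1)} E_{ν,νδ(k+1)+1}^{δ(k+1)}(−λ t^ν) satisfy, for every integer k ≥ 1 and t > 0, the convolution identity p_k(t) = λ^δ ∫_0^t (t−w)^{νδ−1} E_{ν,νδ}^δ(−λ(t−w)^ν) p_{k−1}(w) dw, where λ > 0, ν ∈ (0,1], δ > 0. -/

import Mathlib

open Real MeasureTheory intervalIntegral

noncomputable def ML1 (ν z : ℝ) : ℝ := ∑' n : ℕ, z ^ n / Real.Gamma (ν * n + 1)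

noncomputable def ML2 (β γ z : ℝ) : ℝ := ∑' r : ℕ, z ^ r / Real.Gamma (β * r + γ)

noncomputable def poch (ξ : ℝ) (r : ℕ) : ℝ := ∏ i ∈ Finset.range r, (ξ + i)

noncomputable def ML3 (β γ ξ z : ℝ) : ℝ :=
  ∑' r : ℕ, poch ξ r * z ^ r / (r.factorial * Real.Gamma (β * r + γ))

noncomputable def pstate (lam ν δ : ℝ) (k : ℕ) (t : ℝ) : ℝ :=
  lam ^ (δ * k) * t ^ (ν * δ * k) * ML3 ν (ν * δ * k + 1) (δ * k) (-(lam * t ^ ν)) -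
    lam ^ (δ * (k + 1)) * t ^ (ν * δ * (k + 1)) *
      ML3 ν (ν * δ * (k + 1) + 1) (δ * (k + 1)) (-(lam * t ^ ν))

/-!
Let `h_a(x) = x ^ (a - 1) / Γ(a)`. The Beta integral says `h_a * h_b = h_{a + b}` for the
convolution on the half-line, so for a fixed `β` the assignment `X ^ n ↦ h_{β n + γ}` turns products
of power series into convolutions. The kernel `x ^ (γ - 1) E_{β,γ}^ξ(c x ^ β)` is the image of the
binomial series `(1 - c X) ^ (-ξ)`; hence convolving two such kernels adds both `γ` and `ξ`. Each
state probability is a difference of two of these kernels, and convolution with the kernel for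
`γ = ν δ`, `ξ = δ` raises the index of both by one.
-/

section General

theorem integrable_of_hasSum_of_summable_integral_norm {α E ι : Type*} [MeasurableSpace α]
    {μ : Measure α} [NormedAddCommGroup E] [Countable ι] {F : ι → α → E} {f : α → E}
    (hF : ∀ i, Integrable (F i) μ) (hF_sum : Summable fun i ↦ ∫ a, ‖F i a‖ ∂μ)
    (hf : ∀ᵐ a ∂μ, HasSum (F · a) (f a)) : Integrable f μ := by
  refine ⟨aestronglyMeasurable_of_tendsto_ae Filter.atTop (fun s : Finset ι ↦
    (integrable_finsetSum s fun i _ ↦ hF i).aestronglyMeasurable) hf, ?_⟩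
  calc ∫⁻ a, ‖f a‖ₑ ∂μ
      ≤ ∫⁻ a, ∑' i, ‖F i a‖ₑ ∂μ := by
        refine lintegral_mono_ae ?_
        filter_upwards [hf] with a ha
        rw [← ha.tsum_eq]
        exact enorm_tsum_le_tsum_enorm
    _ = ∑' i, ∫⁻ a, ‖F i a‖ₑ ∂μ := lintegral_tsum fun i ↦ (hF i).aestronglyMeasurable.enorm
    _ = ∑' i, ENNReal.ofReal (∫ a, ‖F i a‖ ∂μ) := by
        simp_rw [ofReal_integral_norm_eq_lintegral_enorm (hF _)]
    _ = ENNReal.ofReal (∑' i, ∫ a, ‖F i a‖ ∂μ) :=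
        (ENNReal.ofReal_tsum_of_nonneg (fun i ↦ integral_nonneg fun _ ↦ norm_nonneg _) hF_sum).symm
    _ < ⊤ := ENNReal.ofReal_lt_top

theorem hasSum_sum_antidiagonal_of_hasSum {A M : Type*} [AddCommMonoid A] [Finset.HasAntidiagonal A]
    [AddCommMonoid M] [TopologicalSpace M] [ContinuousAdd M] [RegularSpace M]
    {f : A × A → M} {s : M} (hf : HasSum f s) :
    HasSum (fun n ↦ ∑ p ∈ Finset.HasAntidiagonal.antidiagonal n, f p) s :=
  (Finset.HasAntidiagonal.sigmaAntidiagonalEquivProd.hasSum_iff.2 hf).sigma fun n ↦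
    Finset.hasSum (Finset.HasAntidiagonal.antidiagonal n) f

end General

section Gamma

theorem exp_neg_mul_rpow_le_Gamma_add_one {R a : ℝ} (hR : 0 ≤ R) (ha : 0 ≤ a) :
    exp (-R) * R ^ a ≤ Gamma (a + 1) := by
  have hconv : IntegrableOn (fun u ↦ exp (-u) * u ^ a) (Set.Ioi 0) := by
    simpa using GammaIntegral_convergent (s := a + 1) (by positivity)
  have hsub : Set.Ioi R ⊆ Set.Ioi 0 := Set.Ioi_subset_Ioi hR
  calc exp (-R) * R ^ a
      = ∫ u in Set.Ioi R, exp (-u) * R ^ a := by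
        rw [MeasureTheory.integral_mul_const, integral_exp_neg_Ioi]
    _ ≤ ∫ u in Set.Ioi R, exp (-u) * u ^ a := by
        refine setIntegral_mono_on ((integrableOn_exp_neg_Ioi R).mul_const _)
          (hconv.mono_set hsub) measurableSet_Ioi fun u (hu : R < u) ↦ ?_
        gcongr
    _ ≤ ∫ u in Set.Ioi 0, exp (-u) * u ^ a := by
        refine setIntegral_mono_set hconv ?_ hsub.eventuallyLE
        filter_upwards [ae_restrict_mem measurableSet_Ioi] with u (hu : 0 < u)
        exact mul_nonneg (exp_nonneg _) (rpow_nonneg hu.le _)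
    _ = Gamma (a + 1) := by rw [Gamma_eq_integral (by positivity), add_sub_cancel_right]

theorem exp_neg_mul_rpow_le_Gamma {r a : ℝ} (hr : 0 ≤ r) (ha : 0 < a) :
    exp (-(exp 1 * r)) * r ^ a ≤ Gamma a := by
  have hle : exp (-(exp 1 * r)) * (exp a * r ^ a) ≤ exp a * Gamma a :=
    calc exp (-(exp 1 * r)) * (exp a * r ^ a)
        = exp (-(exp 1 * r)) * (exp 1 * r) ^ a := by
          rw [mul_rpow (exp_nonneg 1) hr, exp_one_rpow]
      _ ≤ Gamma (a + 1) := exp_neg_mul_rpow_le_Gamma_add_one (by positivity) ha.le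
      _ = a * Gamma a := Gamma_add_one ha.ne'
      _ ≤ exp a * Gamma a := by
          have := (Gamma_pos_of_pos ha).le
          gcongr
          linarith [add_one_le_exp a]
  refine le_of_mul_le_mul_left ?_ (exp_pos a)
  linarith

theorem integral_rpow_mul_rpow_eq_Gamma {a b t : ℝ} (ha : 0 < a) (hb : 0 < b) (ht : 0 < t) :
    ∫ w in Set.Ioo 0 t, (t - w) ^ (a - 1) * w ^ (b - 1) =
      t ^ (a + b - 1) * (Gamma a * Gamma b / Gamma (a + b)) := by
  have hbeta := Complex.betaIntegral_scaled b a ht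
  rw [Complex.betaIntegral_eq_Gamma_mul_div _ _ (by simpa) (by simpa),
    intervalIntegral.integral_of_le ht.le, integral_Ioc_eq_integral_Ioo] at hbeta
  have hreal : ∫ w in Set.Ioo 0 t, (w : ℂ) ^ ((b : ℂ) - 1) * ((t : ℂ) - w) ^ ((a : ℂ) - 1) =
      ((∫ w in Set.Ioo 0 t, (t - w) ^ (a - 1) * w ^ (b - 1) : ℝ) : ℂ) := by
    rw [← integral_complex_ofReal]
    refine setIntegral_congr_fun measurableSet_Ioo fun w hw ↦ ?_
    push_cast [Complex.ofReal_cpow (sub_nonneg.2 hw.2.le), Complex.ofReal_cpow hw.1.le]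
    ring
  apply Complex.ofReal_injective
  rw [← hreal, hbeta]
  push_cast [Complex.ofReal_cpow ht.le, ← Complex.Gamma_ofReal]
  rw [add_comm (b : ℂ) a, mul_comm (Complex.Gamma b)]

end Gamma

/-- The Riemann–Liouville kernel `x ^ (a - 1) / Γ(a)`: convolution with it on the half-line is the
fractional integral of order `a`. It is meant for `0 < a` and `0 < x`. -/
noncomputable def rlKernel (a x : ℝ) : ℝ := x ^ (a - 1) / Gamma a

section RlKernel

theorem rlKernel_pos {a x : ℝ} (ha : 0 < a) (hx : 0 < x) : 0 < rlKernel a x :=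
  div_pos (rpow_pos_of_pos hx _) (Gamma_pos_of_pos ha)

theorem rlKernel_le {a x s : ℝ} (ha : 0 < a) (hx : 0 < x) (hs : 0 < s) :
    rlKernel a x ≤ exp (exp 1 * (x / s)) / x * s ^ a := by
  have hGamma := exp_neg_mul_rpow_le_Gamma (div_pos hx hs).le ha
  rw [rlKernel, div_le_iff₀ (Gamma_pos_of_pos ha)]
  calc x ^ (a - 1)
      = exp (exp 1 * (x / s)) / x * s ^ a * (exp (-(exp 1 * (x / s))) * (x / s) ^ a) := by
        rw [exp_neg, div_rpow hx.le hs.le, rpow_sub_one hx.ne']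
        have := rpow_pos_of_pos hs a
        field_simp
    _ ≤ exp (exp 1 * (x / s)) / x * s ^ a * Gamma a := by gcongr

theorem exists_rlKernel_le_mul_pow {β γ x q : ℝ} (hβ : 0 < β) (hγ : 0 < γ) (hx : 0 < x)
    (hq : 0 < q) : ∃ C, ∀ n : ℕ, rlKernel (β * n + γ) x ≤ C * q ^ n := by
  set s := q ^ β⁻¹ with hs_def
  have hs : 0 < s := rpow_pos_of_pos hq _
  refine ⟨exp (exp 1 * (x / s)) / x * s ^ γ, fun n ↦ ?_⟩
  have hpow : s ^ (β * n + γ) = s ^ γ * q ^ n := by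
    rw [rpow_add hs, rpow_mul_natCast hs.le, hs_def, rpow_inv_rpow hq.le hβ.ne', mul_comm]
  calc rlKernel (β * n + γ) x
      ≤ exp (exp 1 * (x / s)) / x * s ^ (β * n + γ) := rlKernel_le (by positivity) hx hs
    _ = exp (exp 1 * (x / s)) / x * s ^ γ * q ^ n := by rw [hpow, mul_assoc]

theorem integral_rlKernel_mul_rlKernel {a b t : ℝ} (ha : 0 < a) (hb : 0 < b) (ht : 0 < t) :
    ∫ w in Set.Ioo 0 t, rlKernel a (t - w) * rlKernel b w = rlKernel (a + b) t := by
  have hΓa := (Gamma_pos_of_pos ha).ne'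
  have hΓb := (Gamma_pos_of_pos hb).ne'
  simp_rw [rlKernel, div_mul_div_comm]
  rw [MeasureTheory.integral_div, integral_rpow_mul_rpow_eq_Gamma ha hb ht]
  field_simp

-- A non-integrable function would have integral zero.
theorem integrableOn_rlKernel_mul_rlKernel {a b t : ℝ} (ha : 0 < a) (hb : 0 < b) (ht : 0 < t) :
    IntegrableOn (fun w ↦ rlKernel a (t - w) * rlKernel b w) (Set.Ioo 0 t) := by
  refine not_imp_comm.1 integral_undef ?_
  rw [integral_rlKernel_mul_rlKernel ha hb ht]
  exact (rlKernel_pos (add_pos ha hb) ht).ne'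

end RlKernel

open PowerSeries

/-- The image of the power series `φ` under `X ^ n ↦ rlKernel (β * n + γ)`, summed pointwise. -/
noncomputable def rlSeries (β γ : ℝ) (φ : ℝ⟦X⟧) (x : ℝ) : ℝ :=
  ∑' n : ℕ, coeff n φ * rlKernel (β * n + γ) x

section RlSeries

variable {β γ γ' q t x : ℝ} {φ ψ : ℝ⟦X⟧}

theorem hasSum_rlSeries (hβ : 0 < β) (hγ : 0 < γ) (hq : 0 < q)
    (hφ : Summable fun n ↦ |coeff n φ| * q ^ n) (hx : 0 < x) :
    HasSum (fun n : ℕ ↦ coeff n φ * rlKernel (β * n + γ) x) (rlSeries β γ φ x) := by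
  obtain ⟨C, hC⟩ := exists_rlKernel_le_mul_pow hβ hγ hx hq
  refine (Summable.of_norm_bounded (hφ.mul_left C) fun n ↦ ?_).hasSum
  have hpos : 0 < rlKernel (β * n + γ) x := rlKernel_pos (by positivity) hx
  calc ‖coeff n φ * rlKernel (β * n + γ) x‖
      = |coeff n φ| * rlKernel (β * n + γ) x := by
        rw [norm_mul, norm_eq_abs, norm_of_nonneg hpos.le]
    _ ≤ |coeff n φ| * (C * q ^ n) := by gcongr; exact hC n
    _ = C * (|coeff n φ| * q ^ n) := by ring

/-- The `(m, n)`-th term of the product of the series `rlSeries β γ φ (t - w)` and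
`rlSeries β γ' ψ w`. -/
noncomputable def rlProdTerm (β γ γ' : ℝ) (φ ψ : ℝ⟦X⟧) (t : ℝ) (p : ℕ × ℕ) (w : ℝ) : ℝ :=
  coeff p.1 φ * rlKernel (β * p.1 + γ) (t - w) * (coeff p.2 ψ * rlKernel (β * p.2 + γ') w)

theorem rlProdTerm_eq (p : ℕ × ℕ) (w : ℝ) :
    rlProdTerm β γ γ' φ ψ t p w = coeff p.1 φ * coeff p.2 ψ *
      (rlKernel (β * p.1 + γ) (t - w) * rlKernel (β * p.2 + γ') w) :=
  mul_mul_mul_comm ..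

theorem hasSum_rlProdTerm (hβ : 0 < β) (hγ : 0 < γ) (hγ' : 0 < γ') (hq : 0 < q)
    (hφ : Summable fun n ↦ |coeff n φ| * q ^ n) (hψ : Summable fun n ↦ |coeff n ψ| * q ^ n)
    {w : ℝ} (hw : w ∈ Set.Ioo 0 t) :
    HasSum (rlProdTerm β γ γ' φ ψ t · w) (rlSeries β γ φ (t - w) * rlSeries β γ' ψ w) := by
  have hleft := hasSum_rlSeries hβ hγ hq hφ (sub_pos.2 hw.2)
  have hright := hasSum_rlSeries hβ hγ' hq hψ hw.1
  have hprod := hleft.mul hright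
    (summable_mul_of_summable_norm hleft.summable.norm hright.summable.norm)
  exact hprod

theorem integrableOn_rlProdTerm (hβ : 0 < β) (hγ : 0 < γ) (hγ' : 0 < γ') (ht : 0 < t)
    (p : ℕ × ℕ) : IntegrableOn (rlProdTerm β γ γ' φ ψ t p) (Set.Ioo 0 t) := by
  simp_rw [funext (rlProdTerm_eq p)]
  exact (integrableOn_rlKernel_mul_rlKernel (by positivity) (by positivity) ht).const_mul _

theorem integral_rlProdTerm (hβ : 0 < β) (hγ : 0 < γ) (hγ' : 0 < γ') (ht : 0 < t)
    (p : ℕ × ℕ) :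
    ∫ w in Set.Ioo 0 t, rlProdTerm β γ γ' φ ψ t p w =
      coeff p.1 φ * coeff p.2 ψ * rlKernel (β * (p.1 + p.2 : ℕ) + (γ + γ')) t := by
  simp_rw [rlProdTerm_eq, MeasureTheory.integral_const_mul]
  rw [integral_rlKernel_mul_rlKernel (by positivity) (by positivity) ht]
  congr 2
  push_cast
  ring

theorem integral_norm_rlProdTerm (hβ : 0 < β) (hγ : 0 < γ) (hγ' : 0 < γ') (ht : 0 < t)
    (p : ℕ × ℕ) :
    ∫ w in Set.Ioo 0 t, ‖rlProdTerm β γ γ' φ ψ t p w‖ =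
      |coeff p.1 φ| * |coeff p.2 ψ| * rlKernel (β * (p.1 + p.2 : ℕ) + (γ + γ')) t := by
  have hnorm : ∀ w ∈ Set.Ioo 0 t, ‖rlProdTerm β γ γ' φ ψ t p w‖ = |coeff p.1 φ| * |coeff p.2 ψ| *
      (rlKernel (β * p.1 + γ) (t - w) * rlKernel (β * p.2 + γ') w) := fun w hw ↦ by
    have hleft : 0 < rlKernel (β * p.1 + γ) (t - w) :=
      rlKernel_pos (by positivity) (sub_pos.2 hw.2)
    have hright : 0 < rlKernel (β * p.2 + γ') w := rlKernel_pos (by positivity) hw.1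
    rw [rlProdTerm_eq, norm_mul, norm_mul, norm_of_nonneg (mul_pos hleft hright).le,
      norm_eq_abs, norm_eq_abs]
  rw [setIntegral_congr_fun measurableSet_Ioo hnorm, MeasureTheory.integral_const_mul,
    integral_rlKernel_mul_rlKernel (by positivity) (by positivity) ht]
  congr 2
  push_cast
  ring

theorem summable_integral_norm_rlProdTerm (hβ : 0 < β) (hγ : 0 < γ) (hγ' : 0 < γ') (hq : 0 < q)
    (hφ : Summable fun n ↦ |coeff n φ| * q ^ n) (hψ : Summable fun n ↦ |coeff n ψ| * q ^ n)
    (ht : 0 < t) :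
    Summable fun p ↦ ∫ w in Set.Ioo 0 t, ‖rlProdTerm β γ γ' φ ψ t p w‖ := by
  obtain ⟨C, hC⟩ := exists_rlKernel_le_mul_pow hβ (add_pos hγ hγ') ht hq
  have hprod : Summable fun p : ℕ × ℕ ↦ |coeff p.1 φ| * q ^ p.1 * (|coeff p.2 ψ| * q ^ p.2) :=
    hφ.mul_of_nonneg hψ (fun n ↦ by positivity) fun n ↦ by positivity
  refine (hprod.mul_left C).of_nonneg_of_le (fun p ↦ by positivity) fun p ↦ ?_
  rw [integral_norm_rlProdTerm hβ hγ hγ' ht]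
  calc |coeff p.1 φ| * |coeff p.2 ψ| * rlKernel (β * (p.1 + p.2 : ℕ) + (γ + γ')) t
      ≤ |coeff p.1 φ| * |coeff p.2 ψ| * (C * q ^ (p.1 + p.2)) := by gcongr; exact hC _
    _ = C * (|coeff p.1 φ| * q ^ p.1 * (|coeff p.2 ψ| * q ^ p.2)) := by ring

theorem integrableOn_rlSeries_mul_rlSeries (hβ : 0 < β) (hγ : 0 < γ) (hγ' : 0 < γ') (hq : 0 < q)
    (hφ : Summable fun n ↦ |coeff n φ| * q ^ n) (hψ : Summable fun n ↦ |coeff n ψ| * q ^ n)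
    (ht : 0 < t) :
    IntegrableOn (fun w ↦ rlSeries β γ φ (t - w) * rlSeries β γ' ψ w) (Set.Ioo 0 t) := by
  refine integrable_of_hasSum_of_summable_integral_norm
    (integrableOn_rlProdTerm hβ hγ hγ' ht)
    (summable_integral_norm_rlProdTerm hβ hγ hγ' hq hφ hψ ht) ?_
  filter_upwards [ae_restrict_mem measurableSet_Ioo] with w hw
  exact hasSum_rlProdTerm hβ hγ hγ' hq hφ hψ hw

theorem integral_rlSeries_mul_rlSeries (hβ : 0 < β) (hγ : 0 < γ) (hγ' : 0 < γ') (hq : 0 < q)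
    (hφ : Summable fun n ↦ |coeff n φ| * q ^ n) (hψ : Summable fun n ↦ |coeff n ψ| * q ^ n)
    (ht : 0 < t) :
    ∫ w in Set.Ioo 0 t, rlSeries β γ φ (t - w) * rlSeries β γ' ψ w =
      rlSeries β (γ + γ') (φ * ψ) t := by
  have hsum := hasSum_integral_of_summable_integral_norm (integrableOn_rlProdTerm hβ hγ hγ' ht)
    (summable_integral_norm_rlProdTerm hβ hγ hγ' hq hφ hψ ht)
  rw [setIntegral_congr_fun measurableSet_Ioo fun w hw ↦
      (hasSum_rlProdTerm hβ hγ hγ' hq hφ hψ hw).tsum_eq.symm,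
    ← (hasSum_sum_antidiagonal_of_hasSum hsum).tsum_eq, rlSeries]
  congr! 2 with n
  rw [coeff_mul, Finset.sum_mul]
  refine Finset.sum_congr rfl fun p hp ↦ ?_
  rw [integral_rlProdTerm hβ hγ hγ' ht, Finset.HasAntidiagonal.mem_antidiagonal.1 hp]

end RlSeries

/-- The formal binomial series `(1 - c X) ^ (-ξ)`, the generating series of the coefficients of the
three-parameter Mittag-Leffler function `z ↦ E_{β,γ}^ξ(c z)` apart from their Gamma factors. -/
noncomputable def prabhakarSymbol (ξ c : ℝ) : ℝ⟦X⟧ := rescale (-c) (binomialSeries ℝ (-ξ))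

section PrabhakarSymbol

theorem ascPochhammer_eval_eq_poch (ξ : ℝ) (n : ℕ) : (ascPochhammer ℝ n).eval ξ = poch ξ n := by
  induction n with
  | zero => simp [poch]
  | succ n ih => rw [ascPochhammer_succ_eval, ih, poch, poch, Finset.prod_range_succ]

theorem multichoose_eq_poch_div_factorial (ξ : ℝ) (n : ℕ) :
    Ring.multichoose ξ n = poch ξ n / n.factorial := by
  rw [eq_div_iff (by positivity), mul_comm, ← nsmul_eq_mul,
    Ring.factorial_nsmul_multichoose_eq_ascPochhammer, Polynomial.ascPochhammer_smeval_eq_eval,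
    ascPochhammer_eval_eq_poch]

theorem coeff_prabhakarSymbol (ξ c : ℝ) (n : ℕ) :
    coeff n (prabhakarSymbol ξ c) = poch ξ n / n.factorial * c ^ n := by
  rw [prabhakarSymbol, coeff_rescale, binomialSeries_coeff, Ring.choose_neg',
    multichoose_eq_poch_div_factorial, Units.smul_def, zsmul_eq_mul,
    Int.cast_negOnePow_natCast, neg_pow, smul_eq_mul, mul_one, mul_mul_mul_comm, ← mul_pow]
  simp [mul_comm]

theorem prabhakarSymbol_add (ξ η c : ℝ) :
    prabhakarSymbol (ξ + η) c = prabhakarSymbol ξ c * prabhakarSymbol η c := by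
  rw [prabhakarSymbol, neg_add, binomialSeries_add, map_mul, prabhakarSymbol, prabhakarSymbol]

theorem summable_abs_coeff_prabhakarSymbol_mul_pow (ξ : ℝ) {c q : ℝ} (hq : 0 ≤ q)
    (hcq : |c| * q < 1) : Summable fun n ↦ |coeff n (prabhakarSymbol ξ c)| * q ^ n := by
  lift |c| * q to NNReal using by positivity with r hr
  have hradius : (r : ENNReal) < (_root_.binomialSeries ℝ (-ξ)).radius :=
    lt_of_lt_of_le (by exact_mod_cast hcq) binomialSeries_radius_ge_one
  refine (FormalMultilinearSeries.summable_norm_mul_pow _ hradius).congr fun n ↦ ?_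
  rw [_root_.binomialSeries, FormalMultilinearSeries.ofScalars_norm, hr, prabhakarSymbol,
    coeff_rescale, binomialSeries_coeff, smul_eq_mul, mul_one, abs_mul, abs_pow, abs_neg, mul_pow,
    norm_eq_abs]
  ring

theorem exists_pos_forall_summable_abs_coeff_prabhakarSymbol_mul_pow (c : ℝ) :
    ∃ q > 0, ∀ ξ, Summable fun n ↦ |coeff n (prabhakarSymbol ξ c)| * q ^ n := by
  refine ⟨(|c| + 1)⁻¹, by positivity, fun ξ ↦
    summable_abs_coeff_prabhakarSymbol_mul_pow ξ (by positivity) ?_⟩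
  rw [← div_eq_mul_inv, div_lt_one (by positivity)]
  exact lt_add_one _

end PrabhakarSymbol

/-- The Prabhakar kernel `x ^ (γ - 1) E_{β,γ}^ξ(c x ^ β)`, the building block of the state
probabilities. -/
noncomputable def prabhakarKernel (β γ ξ c x : ℝ) : ℝ := x ^ (γ - 1) * ML3 β γ ξ (c * x ^ β)

section PrabhakarKernel

variable {β γ γ' t : ℝ} (ξ η c : ℝ)

theorem prabhakarKernel_eq_rlSeries (β γ : ℝ) {x : ℝ} (hx : 0 < x) :
    prabhakarKernel β γ ξ c x = rlSeries β γ (prabhakarSymbol ξ c) x := by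
  rw [prabhakarKernel, rlSeries, ML3, ← tsum_mul_left]
  congr! 2 with n
  have hpow : x ^ (β * n + γ - 1) = (x ^ β) ^ n * x ^ (γ - 1) := by
    rw [add_sub_assoc, rpow_add hx, rpow_mul_natCast hx.le]
  rw [coeff_prabhakarSymbol, rlKernel, hpow, mul_pow]
  ring

theorem eqOn_prabhakarKernel_mul_prabhakarKernel (β γ γ' t : ℝ) :
    Set.EqOn (fun w ↦ prabhakarKernel β γ ξ c (t - w) * prabhakarKernel β γ' η c w)
      (fun w ↦ rlSeries β γ (prabhakarSymbol ξ c) (t - w) * rlSeries β γ' (prabhakarSymbol η c) w)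
      (Set.Ioo 0 t) := fun w hw ↦ by
  simp only [prabhakarKernel_eq_rlSeries _ _ _ _ (sub_pos.2 hw.2),
    prabhakarKernel_eq_rlSeries _ _ _ _ hw.1]

theorem intervalIntegrable_prabhakarKernel_mul_prabhakarKernel (hβ : 0 < β) (hγ : 0 < γ)
    (hγ' : 0 < γ') (ht : 0 < t) :
    IntervalIntegrable (fun w ↦ prabhakarKernel β γ ξ c (t - w) * prabhakarKernel β γ' η c w)
      volume 0 t := by
  obtain ⟨q, hq, hsum⟩ := exists_pos_forall_summable_abs_coeff_prabhakarSymbol_mul_pow c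
  rw [intervalIntegrable_iff_integrableOn_Ioo_of_le ht.le,
    integrableOn_congr_fun (eqOn_prabhakarKernel_mul_prabhakarKernel ξ η c β γ γ' t)
      measurableSet_Ioo]
  exact integrableOn_rlSeries_mul_rlSeries hβ hγ hγ' hq (hsum ξ) (hsum η) ht

theorem integral_prabhakarKernel_mul_prabhakarKernel (hβ : 0 < β) (hγ : 0 < γ) (hγ' : 0 < γ')
    (ht : 0 < t) :
    ∫ w in 0..t, prabhakarKernel β γ ξ c (t - w) * prabhakarKernel β γ' η c w =
      prabhakarKernel β (γ + γ') (ξ + η) c t := by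
  obtain ⟨q, hq, hsum⟩ := exists_pos_forall_summable_abs_coeff_prabhakarSymbol_mul_pow c
  rw [integral_of_le ht.le, integral_Ioc_eq_integral_Ioo,
    setIntegral_congr_fun measurableSet_Ioo
      (eqOn_prabhakarKernel_mul_prabhakarKernel ξ η c β γ γ' t),
    integral_rlSeries_mul_rlSeries hβ hγ hγ' hq (hsum ξ) (hsum η) ht, ← prabhakarSymbol_add,
    ← prabhakarKernel_eq_rlSeries _ _ _ _ ht]

end PrabhakarKernel

/-- The candidate for the probability that at least `k` events occur up to time `t`: consecutive
differences of this sequence are the state probabilities `pstate`. -/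
noncomputable def tailProb (lam ν δ : ℝ) (k : ℕ) (t : ℝ) : ℝ :=
  lam ^ (δ * k) * prabhakarKernel ν (ν * δ * k + 1) (δ * k) (-lam) t

section TailProb

variable {lam ν δ t : ℝ}

theorem pstate_eq_tailProb_sub_tailProb (lam ν δ : ℝ) (k : ℕ) (t : ℝ) :
    pstate lam ν δ k t = tailProb lam ν δ k t - tailProb lam ν δ (k + 1) t := by
  simp only [pstate, tailProb, prabhakarKernel, add_sub_cancel_right, neg_mul, Nat.cast_add,
    Nat.cast_one, mul_assoc]

theorem intervalIntegrable_prabhakarKernel_mul_tailProb (hν : 0 < ν) (hδ : 0 < δ) (ht : 0 < t)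
    (k : ℕ) :
    IntervalIntegrable (fun w ↦ prabhakarKernel ν (ν * δ) δ (-lam) (t - w) * tailProb lam ν δ k w)
      volume 0 t := by
  simp only [tailProb, mul_left_comm _ (lam ^ (δ * k))]
  exact (intervalIntegrable_prabhakarKernel_mul_prabhakarKernel _ _ _ hν (by positivity)
    (by positivity) ht).const_mul _

theorem tailProb_succ (hlam : 0 < lam) (hν : 0 < ν) (hδ : 0 < δ) (ht : 0 < t) (k : ℕ) :
    tailProb lam ν δ (k + 1) t =
      lam ^ δ * ∫ w in 0..t,
        prabhakarKernel ν (ν * δ) δ (-lam) (t - w) * tailProb lam ν δ k w := by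
  simp only [tailProb, mul_left_comm _ (lam ^ (δ * k)), intervalIntegral.integral_const_mul]
  rw [integral_prabhakarKernel_mul_prabhakarKernel _ _ _ hν (by positivity) (by positivity) ht,
    ← mul_assoc, ← rpow_add hlam]
  push_cast
  ring_nf

end TailProb

theorem stmt9_general (lam ν δ t : ℝ) (k : ℕ) (hlam : 0 < lam) (hν : 0 < ν) (hδ : 0 < δ)
    (ht : 0 < t) :
    pstate lam ν δ (k + 1) t =
      lam ^ δ * ∫ w in (0 : ℝ)..t,
        (t - w) ^ (ν * δ - 1) * ML3 ν (ν * δ) δ (-(lam * (t - w) ^ ν)) * pstate lam ν δ k w := by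
  have hkernel (w : ℝ) : (t - w) ^ (ν * δ - 1) * ML3 ν (ν * δ) δ (-(lam * (t - w) ^ ν)) =
      prabhakarKernel ν (ν * δ) δ (-lam) (t - w) := by rw [prabhakarKernel, neg_mul]
  simp only [hkernel, pstate_eq_tailProb_sub_tailProb, mul_sub]
  rw [intervalIntegral.integral_sub (intervalIntegrable_prabhakarKernel_mul_tailProb hν hδ ht k)
      (intervalIntegrable_prabhakarKernel_mul_tailProb hν hδ ht (k + 1)),
    mul_sub, ← tailProb_succ hlam hν hδ ht, ← tailProb_succ hlam hν hδ ht]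

theorem stmt9 (lam ν δ t : ℝ) (k : ℕ) (hk : 1 ≤ k) (hlam : 0 < lam)
    (hν : ν ∈ Set.Ioc (0 : ℝ) 1) (hδ : 0 < δ) (ht : 0 < t) :
    pstate lam ν δ k t =
      lam ^ δ * ∫ w in (0 : ℝ)..t,
        (t - w) ^ (ν * δ - 1) * ML3 ν (ν * δ) δ (-(lam * (t - w) ^ ν)) *
          pstate lam ν δ (k - 1) w := by
  obtain ⟨m, rfl⟩ := Nat.exists_eq_add_of_le' hk
  exact stmt9_general lam ν δ t m hlam hν.1 hδ ht
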